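/- (Kusmin–Landau) There is an absolute constant C such that the following holds. Let I be an interval, and let f be a continuously differentiable real-valued function on I such that f' is monotonic on I and ‖f'(t)‖ ≥ λ > 0 for all t ∈ I, where ‖x‖ denotes the distance from x to the nearest integer. Then |Σ_{n ∈ I, n ∈ ℤ} e(f(n))| ≤ C/λ. -/

import Mathlib

open Finset

/-- `e(t) = exp(2πit)`. -/
noncomputable def eR (t : ℝ) : ℂ := Complex.exp (2 * Real.pi * Complex.I * t)

lemma eR_eq (t : ℝ) : eR t = Complex.exp ((2 * Real.pi * t : ℝ) * Complex.I) := by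
  unfold eR
  congr 1
  push_cast
  ring

lemma norm_eR (t : ℝ) : ‖eR t‖ = 1 := by
  rw [eR_eq, Complex.norm_exp_ofReal_mul_I]

lemma eR_add (s t : ℝ) : eR (s + t) = eR s * eR t := by
  simp only [eR, ← Complex.exp_add]
  congr 1
  push_cast
  ring

lemma eR_intCast (k : ℤ) : eR k = 1 := by
  rw [eR, Complex.exp_eq_one_iff]
  exact ⟨k, by push_cast; ring⟩

lemma norm_sum_eR_neg {ι : Type*} (s : Finset ι) (g : ι → ℝ) :
    ‖∑ i ∈ s, eR (-g i)‖ = ‖∑ i ∈ s, eR (g i)‖ := by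
  rw [← Complex.norm_conj (∑ i ∈ s, eR (g i)), map_sum]
  congr 1
  refine Finset.sum_congr rfl fun i _ => ?_
  rw [eR_eq, eR_eq, ← Complex.exp_conj, map_mul, Complex.conj_ofReal, Complex.conj_I]
  congr 1
  push_cast
  ring

lemma two_mul_le_sin_pi_mul {lam d : ℝ} (hlam : 0 < lam) (h₁ : lam ≤ d) (h₂ : d ≤ 1 - lam) :
    2 * lam ≤ Real.sin (Real.pi * d) := by
  have key : ∀ u : ℝ, 0 ≤ u → u ≤ 1 / 2 → 2 * u ≤ Real.sin (Real.pi * u) := by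
    intro u h0 h1
    have h := Real.mul_le_sin (x := Real.pi * u) (by positivity) (by nlinarith [Real.pi_pos])
    have e : 2 / Real.pi * (Real.pi * u) = 2 * u := by field_simp
    linarith
  rcases le_total d (1 / 2) with h | h
  · linarith [key d (by linarith) h]
  · have := key (1 - d) (by linarith) (by linarith)
    rw [show Real.pi * (1 - d) = Real.pi - Real.pi * d by ring, Real.sin_pi_sub] at this
    linarith

/-- Half the cotangent of `π * d`: the imaginary part of `(1 - eR d)⁻¹`. -/
noncomputable def halfCot (d : ℝ) : ℝ := Real.cos (Real.pi * d) / Real.sin (Real.pi * d) / 2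

/-- The number `(1 - eR d)⁻¹` in Cartesian form. -/
noncomputable def invOneSub (d : ℝ) : ℂ := 1 / 2 + halfCot d * Complex.I

lemma invOneSub_sub_eR_mul {d : ℝ} (hd : Real.sin (Real.pi * d) ≠ 0) :
    invOneSub d - eR d * invOneSub d = 1 := by
  have hs : (Complex.sin (Real.pi * d)) ≠ 0 := by exact_mod_cast hd
  have he : eR d =
      (Complex.cos (Real.pi * d) + Complex.sin (Real.pi * d) * Complex.I) ^ 2 := by
    rw [← Complex.exp_mul_I, ← Complex.exp_nat_mul, eR]
    congr 1
    push_cast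
    ring
  rw [he, invOneSub, halfCot]
  push_cast
  have h := Complex.sin_sq_add_cos_sq (Real.pi * d : ℂ)
  generalize Complex.sin (Real.pi * d : ℂ) = s at *
  generalize Complex.cos (Real.pi * d : ℂ) = c at *
  field_simp
  have hI := Complex.I_sq
  generalize Complex.I = j at *
  have hc : c ^ 2 = 1 - s ^ 2 := by linear_combination h
  have hc3 : c ^ 3 = (1 - s ^ 2) * c := by linear_combination c * h
  ring_nf
  have hj3 : j ^ 3 = -j := by linear_combination j * hI
  rw [hj3, hI, hc3, hc]
  ring

lemma abs_halfCot_le {lam d : ℝ} (hlam : 0 < lam) (h₁ : lam ≤ d) (h₂ : d ≤ 1 - lam) :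
    |halfCot d| ≤ 1 / (4 * lam) := by
  have hs := two_mul_le_sin_pi_mul hlam h₁ h₂
  have hs0 : 0 < Real.sin (Real.pi * d) := by linarith
  rw [halfCot, abs_div, abs_div, abs_of_pos hs0, abs_two, div_div]
  exact div_le_div₀ zero_le_one (Real.abs_cos_le_one _) (by positivity) (by linarith)

lemma norm_invOneSub_le {lam d : ℝ} (hlam : 0 < lam) (h₁ : lam ≤ d) (h₂ : d ≤ 1 - lam) :
    ‖invOneSub d‖ ≤ 1 / (2 * lam) := by
  have h := abs_halfCot_le hlam h₁ h₂
  have hhalf : 1 / 2 ≤ 1 / (4 * lam) := one_div_le_one_div_of_le (by positivity) (by linarith)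
  calc ‖invOneSub d‖ ≤ ‖(1 / 2 : ℂ)‖ + ‖(halfCot d : ℂ) * Complex.I‖ := norm_add_le _ _
    _ = 1 / 2 + |halfCot d| := by simp
    _ ≤ 1 / (4 * lam) + 1 / (4 * lam) := add_le_add hhalf h
    _ = 1 / (2 * lam) := by field_simp; norm_num

lemma norm_invOneSub_sub (d d' : ℝ) :
    ‖invOneSub d' - invOneSub d‖ = |halfCot d' - halfCot d| := by
  have : invOneSub d' - invOneSub d = ((halfCot d' - halfCot d : ℝ) : ℂ) * Complex.I := by
    simp only [invOneSub]
    push_cast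
    ring
  rw [this, norm_mul, Complex.norm_I, mul_one, Complex.norm_real, Real.norm_eq_abs]

lemma halfCot_antitoneOn : AntitoneOn halfCot (Set.Ioo 0 1) := by
  intro d hd d' hd' h
  have hpos : ∀ u ∈ Set.Ioo (0 : ℝ) 1, 0 < Real.sin (Real.pi * u) := fun u hu =>
    Real.sin_pos_of_pos_of_lt_pi (mul_pos Real.pi_pos hu.1) (by nlinarith [Real.pi_pos, hu.2])
  have hsub : 0 ≤ Real.sin (Real.pi * d' - Real.pi * d) :=
    Real.sin_nonneg_of_nonneg_of_le_pi (by nlinarith [Real.pi_pos])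
      (by nlinarith [Real.pi_pos, hd.1, hd'.2])
  rw [Real.sin_sub] at hsub
  unfold halfCot
  gcongr ?_ / 2
  rw [div_le_div_iff₀ (hpos d' hd') (hpos d hd)]
  linarith

/-- Summation by parts for a sequence with monotone increments `d i`. -/
lemma norm_sum_range_add_le {x d : ℕ → ℝ} {N : ℕ}
    (hx : ∀ i ≤ N, eR (x (i + 1)) = eR (x i) * eR (d i))
    (hd : ∀ i ≤ N, d i ∈ Set.Ioo (0 : ℝ) 1) (hmono : ∀ i < N, d i ≤ d (i + 1)) :
    ‖∑ i ∈ Finset.range (N + 1), eR (x i) + eR (x (N + 1)) * invOneSub (d N)‖ ≤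
      ‖invOneSub (d 0)‖ + (halfCot (d 0) - halfCot (d N)) := by
  have hstep : ∀ i ≤ N, eR (x i) + eR (x (i + 1)) * invOneSub (d i) =
      eR (x i) * invOneSub (d i) := by
    intro i hi
    have hs : 0 < Real.sin (Real.pi * d i) :=
      Real.sin_pos_of_pos_of_lt_pi (mul_pos Real.pi_pos (hd i hi).1)
        (by nlinarith [Real.pi_pos, (hd i hi).2])
    rw [hx i hi]
    linear_combination -eR (x i) * invOneSub_sub_eR_mul hs.ne'
  induction N with
  | zero =>
    simp only [zero_add, Finset.sum_range_one, sub_self, add_zero]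
    rw [← zero_add 1, hstep 0 le_rfl, norm_mul, norm_eR, one_mul]
  | succ N ih =>
    have ih := ih (fun i hi => hx i (by omega)) (fun i hi => hd i (by omega))
      (fun i hi => hmono i (by omega)) (fun i hi => hstep i (by omega))
    have hcot : halfCot (d (N + 1)) ≤ halfCot (d N) :=
      halfCot_antitoneOn (hd N (by omega)) (hd (N + 1) le_rfl) (hmono N (by omega))
    have hsplit : ∑ i ∈ Finset.range (N + 1 + 1), eR (x i) +
          eR (x (N + 1 + 1)) * invOneSub (d (N + 1)) =
        (∑ i ∈ Finset.range (N + 1), eR (x i) + eR (x (N + 1)) * invOneSub (d N)) +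
          eR (x (N + 1)) * (invOneSub (d (N + 1)) - invOneSub (d N)) := by
      rw [Finset.sum_range_succ]
      linear_combination hstep (N + 1) le_rfl
    rw [hsplit]
    refine (norm_add_le _ _).trans ?_
    rw [norm_mul, norm_eR, one_mul, norm_invOneSub_sub, abs_of_nonpos (by linarith)]
    linarith

lemma norm_sum_range_le {x d : ℕ → ℝ} {N : ℕ} {lam : ℝ} (hlam : 0 < lam) (hlam' : lam ≤ 1 / 2)
    (hx : ∀ i < N, eR (x (i + 1)) = eR (x i) * eR (d i))
    (hd : ∀ i < N, lam ≤ d i ∧ d i ≤ 1 - lam) (hmono : ∀ i, i + 1 < N → d i ≤ d (i + 1)) :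
    ‖∑ i ∈ Finset.range (N + 1), eR (x i)‖ ≤ 2 / lam := by
  have hone : 1 ≤ 1 / (2 * lam) := by
    rw [le_div_iff₀ (by positivity)]
    linarith
  have htwo : 2 / lam = 4 * (1 / (2 * lam)) := by
    field_simp
    norm_num
  rcases N with _ | N
  · simp only [zero_add, Finset.sum_range_one, norm_eR]
    linarith
  · have h := norm_sum_range_add_le (x := x) (d := d) (N := N) (fun i hi => hx i (by omega))
      (fun i hi => ⟨by linarith [hd i (by omega)], by linarith [hd i (by omega)]⟩)
      (fun i hi => hmono i (by omega))
    have h0 := hd 0 (by omega)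
    have hN := hd N (by omega)
    have c0 := norm_invOneSub_le hlam h0.1 h0.2
    have cN := norm_invOneSub_le hlam hN.1 hN.2
    have g0 := (abs_le.mp (abs_halfCot_le hlam h0.1 h0.2)).2
    have gN := (abs_le.mp (abs_halfCot_le hlam hN.1 hN.2)).1
    have hquarter : 1 / (2 * lam) = 2 * (1 / (4 * lam)) := by
      field_simp
      norm_num
    rw [Finset.sum_range_succ]
    have hS : ‖∑ i ∈ Finset.range (N + 1), eR (x i)‖ ≤
        ‖∑ i ∈ Finset.range (N + 1), eR (x i) + eR (x (N + 1)) * invOneSub (d N)‖ +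
          ‖eR (x (N + 1)) * invOneSub (d N)‖ := by
      simpa using norm_sub_le
        (∑ i ∈ Finset.range (N + 1), eR (x i) + eR (x (N + 1)) * invOneSub (d N))
        (eR (x (N + 1)) * invOneSub (d N))
    rw [norm_mul, norm_eR, one_mul] at hS
    have hlast := norm_add_le (∑ i ∈ Finset.range (N + 1), eR (x i)) (eR (x (N + 1)))
    rw [norm_eR] at hlast
    linarith

/-- A continuous function staying at distance `≥ lam > 0` from the integers stays between
two consecutive ones. -/
lemma exists_int_add_le_of_continuousOn {a b lam : ℝ} (hab : a ≤ b) (hlam : 0 < lam) {g : ℝ → ℝ}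
    (hg : ContinuousOn g (Set.Icc a b)) (hdist : ∀ t ∈ Set.Icc a b, ∀ z : ℤ, lam ≤ |g t - z|) :
    ∃ k : ℤ, ∀ t ∈ Set.Icc a b, k + lam ≤ g t ∧ g t ≤ k + 1 - lam := by
  have hconn : (g '' Set.Icc a b).OrdConnected :=
    (isPreconnected_Icc.image g hg).ordConnected
  have hnot : ∀ z : ℤ, (z : ℝ) ∉ g '' Set.Icc a b := by
    rintro z ⟨t, ht, hz⟩
    have := hdist t ht z
    rw [hz, sub_self, abs_zero] at this
    linarith
  have ha : a ∈ Set.Icc a b := ⟨le_rfl, hab⟩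
  refine ⟨⌊g a⌋, fun t ht => ?_⟩
  have hlo : (⌊g a⌋ : ℝ) ≤ g t := by
    by_contra! h
    exact hnot ⌊g a⌋ (hconn.out ⟨t, ht, rfl⟩ ⟨a, ha, rfl⟩ ⟨h.le, Int.floor_le _⟩)
  have hhi : g t ≤ ⌊g a⌋ + 1 := by
    by_contra! h
    refine hnot (⌊g a⌋ + 1) (hconn.out ⟨a, ha, rfl⟩ ⟨t, ht, rfl⟩ ⟨?_, ?_⟩)
    · exact_mod_cast (Int.lt_floor_add_one (g a)).le
    · exact_mod_cast h.le
  have h1 := hdist t ht ⌊g a⌋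
  have h2 := hdist t ht (⌊g a⌋ + 1)
  push_cast at h2
  rw [abs_of_nonneg (by linarith)] at h1
  rw [abs_of_nonpos (by linarith)] at h2
  constructor <;> linarith

lemma sum_Icc_int_eq_sum_range {M : Type*} [AddCommMonoid M] (m : ℤ) (N : ℕ) (g : ℤ → M) :
    ∑ n ∈ Finset.Icc m (m + N), g n = ∑ i ∈ Finset.range (N + 1), g (m + i) := by
  symm
  refine Finset.sum_bij (fun i _ => m + (i : ℤ)) ?_ ?_ ?_ fun _ _ => rfl
  · intro i hi
    simp only [Finset.mem_range, Finset.mem_Icc] at *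
    omega
  · intro i _ j _ h
    simpa using h
  · intro n hn
    rw [Finset.mem_Icc] at hn
    exact ⟨(n - m).toNat, by rw [Finset.mem_range]; omega, by omega⟩

lemma norm_sum_eR_le_of_monotoneOn {a b lam : ℝ} (hlam : 0 < lam) {f f' : ℝ → ℝ}
    (hf : ∀ t ∈ Set.Icc a b, HasDerivAt f (f' t) t) (hcont : ContinuousOn f' (Set.Icc a b))
    (hmono : MonotoneOn f' (Set.Icc a b))
    (hdist : ∀ t ∈ Set.Icc a b, ∀ z : ℤ, lam ≤ |f' t - z|) :
    ‖∑ n ∈ Finset.Icc ⌈a⌉ ⌊b⌋, eR (f n)‖ ≤ 2 / lam := by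
  rcases lt_or_ge ⌊b⌋ ⌈a⌉ with hlt | hle
  · rw [Finset.Icc_eq_empty (by omega), Finset.sum_empty, norm_zero]
    positivity
  obtain ⟨N, hN⟩ := Int.le.dest hle
  have ham : a ≤ ⌈a⌉ := Int.le_ceil a
  have hmb : (⌈a⌉ : ℝ) + N ≤ b := by
    have : ((⌈a⌉ + N : ℤ) : ℝ) ≤ b := by
      rw [hN]
      exact Int.floor_le b
    exact_mod_cast this
  generalize ⌈a⌉ = m at *
  have hN0 : (0 : ℝ) ≤ N := N.cast_nonneg
  have hab : a ≤ b := by linarith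
  obtain ⟨k, hk⟩ := exists_int_add_le_of_continuousOn hab hlam hcont hdist
  have hlam' : lam ≤ 1 / 2 := by linarith [hk a ⟨le_rfl, hab⟩]
  have hmvt : ∀ i : ℕ, ∃ ξ : ℝ, i < N → ξ ∈ Set.Icc a b ∧ (m + i : ℝ) ≤ ξ ∧ ξ ≤ m + i + 1 ∧
      f' ξ = f (m + i + 1) - f (m + i) := by
    intro i
    by_cases hi : i < N
    · have hiN : (i : ℝ) + 1 ≤ N := by exact_mod_cast hi
      have hi0 : (0 : ℝ) ≤ i := i.cast_nonneg
      have hsub : Set.Icc (m + i : ℝ) (m + i + 1) ⊆ Set.Icc a b :=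
        Set.Icc_subset_Icc (by linarith) (by linarith)
      obtain ⟨ξ, hξ, h⟩ := exists_hasDerivAt_eq_slope f f' (lt_add_one (m + i : ℝ))
        (fun t ht => (hf t (hsub ht)).continuousAt.continuousWithinAt)
        (fun t ht => hf t (hsub (Set.Ioo_subset_Icc_self ht)))
      refine ⟨ξ, fun _ => ⟨hsub (Set.Ioo_subset_Icc_self hξ), hξ.1.le, hξ.2.le, ?_⟩⟩
      rw [h, add_sub_cancel_left, div_one]
    · exact ⟨0, fun h => absurd h hi⟩
  choose ξ hξ using hmvt
  rw [← hN, sum_Icc_int_eq_sum_range]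
  refine norm_sum_range_le (x := fun i : ℕ => f ((m + i : ℤ) : ℝ)) (d := fun i => f' (ξ i) - k)
    hlam hlam' ?_ ?_ ?_
  · intro i hi
    have hd := (hξ i hi).2.2.2
    rw [← eR_add, ← mul_one (eR (_ + _)), ← eR_intCast k, ← eR_add]
    congr 1
    rw [hd]
    push_cast
    rw [← add_assoc]
    ring
  · intro i hi
    have := hk _ (hξ i hi).1
    constructor <;> linarith
  · intro i hi
    have h1 := hξ i (by omega)
    have h2 := hξ (i + 1) hi
    refine sub_le_sub_right (hmono h1.1 h2.1 ?_) _
    have h3 := h2.2.1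
    push_cast at h3
    linarith [h1.2.2.1]

/-- Kusmin–Landau: if `f` is continuously differentiable with monotonic
derivative on `[a, b]`, and the derivative stays at distance `≥ λ > 0` from
the integers, then `Σ_{a ≤ n ≤ b} e(f(n)) ≪ λ⁻¹`. -/
theorem kusmin_landau :
    ∃ C : ℝ, 0 < C ∧ ∀ a b lam : ℝ, 0 < lam → ∀ f f' : ℝ → ℝ,
      (∀ t ∈ Set.Icc a b, HasDerivAt f (f' t) t) →
      ContinuousOn f' (Set.Icc a b) →
      (MonotoneOn f' (Set.Icc a b) ∨ AntitoneOn f' (Set.Icc a b)) →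
      (∀ t ∈ Set.Icc a b, lam ≤ |f' t - round (f' t)|) →
      ‖∑ n ∈ Finset.Icc ⌈a⌉ ⌊b⌋, eR (f n)‖ ≤ C / lam := by
  refine ⟨2, two_pos, fun a b lam hlam f f' hf hcont hmono hround => ?_⟩
  have hdist : ∀ t ∈ Set.Icc a b, ∀ z : ℤ, lam ≤ |f' t - z| := fun t ht z =>
    (hround t ht).trans (round_le _ z)
  rcases hmono with hmono | hanti
  · exact norm_sum_eR_le_of_monotoneOn hlam hf hcont hmono hdist
  · rw [← norm_sum_eR_neg]
    refine norm_sum_eR_le_of_monotoneOn (f := fun t => -f t) (f' := fun t => -f' t) hlam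
      (fun t ht => (hf t ht).neg) hcont.neg hanti.neg fun t ht z => ?_
    have h := hdist t ht (-z)
    rw [← abs_neg] at h
    refine h.trans_eq (congrArg _ ?_)
    push_cast
    ring
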